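/- Assume (H1) and (H2), assume f is topologically exact (for every nonempty open U ⊆ M there is n ≥ 1 with f^n(U) = M), and let φ : M → ℝ be α-Hölder with sup φ − inf φ < log deg(f) − log q. Then there exist λ ≥ deg(f)·e^{inf φ} and a Borel probability measure ν on M such that ∫ 𝓛_φ g dν = λ·∫ g dν for every continuous g : M → ℝ, and ν has Jacobian J_ν f = λ·e^{−φ} with respect to f, i.e. ν(f(E)) = ∫_E λ·e^{−φ} dν for every Borel set E ⊆ M on which f is injective. -/

import Mathlib

open MeasureTheory Real Set Filter Topology

/-- The Ruelle–Perron–Frobenius transfer operator of `(f, φ)`. -/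
noncomputable def transferOp {M : Type*} (f : M → M) (φ g : M → ℝ) : M → ℝ :=
  fun x => ∑' y : {y : M // f y = x}, Real.exp (φ y.1) * g y.1

/-- `g` satisfies the global `(C, α)`-Hölder estimate. -/
def HolderBound {M : Type*} [MetricSpace M] (α C : ℝ) (g : M → ℝ) : Prop :=
  ∀ x y : M, |g x - g y| ≤ C * dist x y ^ α

/-!
Write `𝓛` for the transfer operator. It acts on `C(M, ℝ)`, because a local homeomorphism of a
compact space is a covering map, and it is positive. Call `s` subcritical if `s g < 𝓛 g` everywhere
for some `g` with a positive value, and supercritical if `𝓛 h < s h` everywhere for some positive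
`h`. These are nonempty open sets of real numbers, disjoint by the Collatz–Wielandt inequality,
so by connectedness of the line some `s` lies in neither. For such an `s` no function in the range
of `𝓛 - s` is everywhere positive, hence by Hahn–Banach and Riesz that range is annihilated by a
probability measure `ν`, that is, `𝓛* ν = s ν`.

The equality `𝓛* ν = s ν`, known on continuous functions, extends to measurable ones once `𝓛` is
viewed as integration against the kernel `x ↦ ∑_{f y = x} e^{φ y} δ_y`. On the function
`1_E e^{-φ}`, with `f` injective on `E`, it becomes the Jacobian formula, since `𝓛` maps
`1_E e^{-φ}` to `1_{f(E)}`.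
-/

open scoped ENNReal NNReal BoundedContinuousFunction

section PositiveOperator

variable {X : Type*} [TopologicalSpace X]

theorem convex_setOf_forall_pos : Convex ℝ {g : C(X, ℝ) | ∀ x, 0 < g x} :=
  fun _ hg _ hh _ _ ha hb hab x ↦ convex_Ioi (0 : ℝ) (hg x) (hh x) ha hb hab

theorem exists_pos_or_forall_neg_of_mul_lt (T : C(X, ℝ) →ₚ[ℝ] C(X, ℝ)) {g : C(X, ℝ)} {s : ℝ}
    (hg : ∀ x, s * g x < T g x) : (∃ x, 0 < g x) ∨ ∀ x, g x < 0 := by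
  refine or_iff_not_imp_left.2 fun hpos ↦ ?_
  push Not at hpos
  have hT : T g ≤ 0 := by simpa using T.monotone' (show g ≤ 0 from hpos)
  refine fun x ↦ (hpos x).lt_of_ne fun hx ↦ ?_
  simpa [hx] using (hg x).trans_le (hT x)

theorem nonpos_of_forall_pos_imp_neg {F : C(X, ℝ) →ₗ[ℝ] ℝ}
    (hF : ∀ g : C(X, ℝ), (∀ x, 0 < g x) → F g < 0) {g : C(X, ℝ)} (hg : 0 ≤ g) : F g ≤ 0 := by
  have hF1 : F 1 < 0 := hF 1 fun _ ↦ one_pos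
  by_contra! hpos
  have hlt := hF (g + (F g / -F 1) • 1) fun x ↦ by
    simpa using add_pos_of_nonneg_of_pos (hg x) (div_pos hpos (neg_pos.2 hF1))
  rw [map_add, map_smul, smul_eq_mul, div_neg, neg_mul, div_mul_cancel₀ _ hF1.ne] at hlt
  linarith

variable [CompactSpace X]

theorem isOpen_setOf_forall_pos : IsOpen {g : C(X, ℝ) | ∀ x, 0 < g x} := by
  simpa [Set.range_subset_iff] using
    ContinuousMap.isOpen_setOfPred_range_subset (X := X) (isOpen_Ioi (a := (0 : ℝ)))

theorem isOpen_setOf_forall_mul_lt (g k : C(X, ℝ)) : IsOpen {s : ℝ | ∀ x, s * g x < k x} := by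
  have hcont : Continuous fun s : ℝ ↦ k - s • g := by fun_prop
  simpa using isOpen_setOf_forall_pos.preimage hcont

theorem exists_le_smul_of_forall_pos {g h : C(X, ℝ)} (hg : ∃ x, 0 < g x) (hh : ∀ x, 0 < h x) :
    ∃ c : ℝ, 0 < c ∧ g ≤ c • h ∧ ∃ x, g x = c * h x := by
  obtain ⟨x₀, hx₀⟩ := hg
  have hcont : Continuous fun x ↦ g x / h x :=
    g.continuous.div h.continuous fun x ↦ (hh x).ne'
  obtain ⟨x, -, hmax⟩ := isCompact_univ.exists_isMaxOn ⟨x₀, mem_univ x₀⟩ hcont.continuousOn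
  have hle : ∀ y, g y / h y ≤ g x / h x := fun y ↦ hmax (mem_univ y)
  exact ⟨g x / h x, (div_pos hx₀ (hh x₀)).trans_le (hle x₀),
    fun y ↦ (div_le_iff₀ (hh y)).1 (hle y), x, (div_mul_cancel₀ _ (hh x).ne').symm⟩

theorem collatz_wielandt_lt (T : C(X, ℝ) →ₚ[ℝ] C(X, ℝ)) {g h : C(X, ℝ)} {r s : ℝ}
    (hg : ∃ x, 0 < g x) (hrg : ∀ x, r * g x ≤ T g x)
    (hh : ∀ x, 0 < h x) (hsh : ∀ x, T h x < s * h x) : r < s := by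
  obtain ⟨c, hc, hle, x, hx⟩ := exists_le_smul_of_forall_pos hg hh
  have hTle : T g x ≤ c * T h x := by simpa using T.monotone' hle x
  have hlt : r * g x < s * g x :=
    calc r * g x ≤ c * T h x := (hrg x).trans hTle
      _ < c * (s * h x) := mul_lt_mul_of_pos_left (hsh x) hc
      _ = s * g x := by rw [hx]; ring
  exact lt_of_mul_lt_mul_right hlt (hx ▸ mul_pos hc (hh x)).le

theorem exists_forall_exists_apply_le_mul [Nonempty X] (T : C(X, ℝ) →ₚ[ℝ] C(X, ℝ)) :
    ∃ s : ℝ, ∀ g : C(X, ℝ), ∃ x, T g x ≤ s * g x := by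
  by_contra! hcon
  let subcritical : Set ℝ := ⋃ g ∈ {g : C(X, ℝ) | ∃ x, 0 < g x}, {s | ∀ x, s * g x < T g x}
  let supercritical : Set ℝ := ⋃ h ∈ {h : C(X, ℝ) | ∀ x, 0 < h x}, {s | ∀ x, s * (-h) x < T (-h) x}
  have hsub : IsOpen subcritical :=
    isOpen_biUnion fun g _ ↦ isOpen_setOf_forall_mul_lt g (T g)
  have hsup : IsOpen supercritical :=
    isOpen_biUnion fun h _ ↦ isOpen_setOf_forall_mul_lt (-h) (T (-h))
  have hcover : subcritical ∪ supercritical = univ := by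
    refine eq_univ_of_forall fun s ↦ ?_
    obtain ⟨g, hg⟩ := hcon s
    refine (exists_pos_or_forall_neg_of_mul_lt T hg).imp (fun hpos ↦ ?_) fun hneg ↦ ?_
    · exact mem_biUnion hpos hg
    · exact mem_biUnion (x := -g) (by simpa using hneg) (by simpa using hg)
  have hsub_ne : subcritical.Nonempty := by
    have hT1 : 0 ≤ T 1 := T.map_nonneg zero_le_one
    refine ⟨-1, mem_biUnion (x := 1) (by simp) fun x ↦ ?_⟩
    simpa using neg_one_lt_zero.trans_le (hT1 x)
  have hsup_ne : supercritical.Nonempty := by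
    refine ⟨‖T 1‖ + 1, mem_biUnion (x := 1) (by simp) fun x ↦ ?_⟩
    have hT1 := ((le_abs_self _).trans ((T 1).norm_coe_le_norm x)).trans_lt (lt_add_one ‖T 1‖)
    simpa using hT1
  obtain ⟨s, hs_sub, hs_sup⟩ := nonempty_inter hsub hsup hcover hsub_ne hsup_ne
  simp only [subcritical, supercritical, mem_iUnion, mem_ofPred_eq] at hs_sub hs_sup
  obtain ⟨g, hg, hsg⟩ := hs_sub
  obtain ⟨h, hh, hsh⟩ := hs_sup
  exact (collatz_wielandt_lt T hg (fun x ↦ (hsg x).le) hh fun x ↦ by simpa using hsh x).false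

theorem exists_functional_neg_of_pos_of_forall_mem_exists_nonpos (V : Submodule ℝ C(X, ℝ))
    (hV : ∀ v ∈ V, ∃ x, v x ≤ 0) :
    ∃ F : StrongDual ℝ C(X, ℝ), (∀ g : C(X, ℝ), (∀ x, 0 < g x) → F g < 0) ∧ ∀ v ∈ V, F v = 0 := by
  have hdisj : Disjoint {g : C(X, ℝ) | ∀ x, 0 < g x} V := disjoint_left.2 fun g hg hgV ↦
    let ⟨x, hx⟩ := hV g hgV
    (hg x).not_ge hx
  obtain ⟨F, u, hF, hu⟩ :=
    geometric_hahn_banach_open convex_setOf_forall_pos isOpen_setOf_forall_pos V.convex hdisj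
  refine ⟨F, fun g hg ↦ (hF g hg).trans_le (by simpa using hu 0 V.zero_mem), fun v hv ↦ ?_⟩
  by_contra hne
  have hle := hu (((u - 1) / F v) • v) (V.smul_mem _ hv)
  rw [map_smul, smul_eq_mul, div_mul_cancel₀ _ hne] at hle
  linarith

theorem exists_positiveLinearMap_eq_zero_of_forall_mem_exists_nonpos (V : Submodule ℝ C(X, ℝ))
    (hV : ∀ v ∈ V, ∃ x, v x ≤ 0) :
    ∃ Λ : C(X, ℝ) →ₚ[ℝ] ℝ, Λ 1 = 1 ∧ ∀ v ∈ V, Λ v = 0 := by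
  obtain ⟨F, hF, hFV⟩ := exists_functional_neg_of_pos_of_forall_mem_exists_nonpos V hV
  have hF1 : F 1 < 0 := hF 1 fun _ ↦ one_pos
  refine ⟨.mk₀ ((F 1)⁻¹ • F.toLinearMap) fun g hg ↦ ?_, ?_, fun v hv ↦ ?_⟩
  · exact mul_nonneg_of_nonpos_of_nonpos (inv_nonpos.2 hF1.le)
      (nonpos_of_forall_pos_imp_neg (F := F.toLinearMap) hF hg)
  · exact inv_mul_cancel₀ hF1.ne
  · exact mul_eq_zero_of_right _ (hFV v hv)

variable [T2Space X] [MeasurableSpace X] [BorelSpace X]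

theorem exists_isProbabilityMeasure_integral_eq (Λ : C(X, ℝ) →ₚ[ℝ] ℝ) (hΛ : Λ 1 = 1) :
    ∃ ν : Measure X, IsProbabilityMeasure ν ∧ ∀ g : C(X, ℝ), ∫ x, g x ∂ν = Λ g := by
  let Λc : CompactlySupportedContinuousMap X ℝ →ₚ[ℝ] ℝ :=
    { toFun := fun g ↦ Λ g.toContinuousMap
      map_add' := fun g h ↦ map_add Λ g.toContinuousMap h.toContinuousMap
      map_smul' := fun c g ↦ map_smul Λ c g.toContinuousMap
      monotone' := fun _ _ hgh ↦ Λ.monotone' hgh }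
  have hint (g : C(X, ℝ)) : ∫ x, g x ∂(RealRMK.rieszMeasure Λc) = Λ g :=
    RealRMK.integral_rieszMeasure Λc (CompactlySupportedContinuousMap.continuousMapEquiv g)
  refine ⟨RealRMK.rieszMeasure Λc, ⟨?_⟩, hint⟩
  have hone : (RealRMK.rieszMeasure Λc).real univ = 1 := by simpa [hΛ] using hint 1
  rwa [Measure.real, ENNReal.toReal_eq_one_iff] at hone

theorem exists_eigenmeasure [Nonempty X] (T : C(X, ℝ) →ₚ[ℝ] C(X, ℝ)) :
    ∃ (s : ℝ) (ν : Measure X), IsProbabilityMeasure ν ∧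
      ∀ g : C(X, ℝ), ∫ x, T g x ∂ν = s * ∫ x, g x ∂ν := by
  obtain ⟨s, hs⟩ := exists_forall_exists_apply_le_mul T
  let V : Submodule ℝ C(X, ℝ) := LinearMap.range (T.toLinearMap - s • LinearMap.id)
  have hV : ∀ v ∈ V, ∃ x, v x ≤ 0 := by
    rintro _ ⟨g, rfl⟩
    simpa using hs g
  obtain ⟨Λ, hΛ1, hΛV⟩ := exists_positiveLinearMap_eq_zero_of_forall_mem_exists_nonpos V hV
  obtain ⟨ν, hν, hint⟩ := exists_isProbabilityMeasure_integral_eq Λ hΛ1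
  refine ⟨s, ν, hν, fun g ↦ ?_⟩
  have hzero : Λ (T g - s • g) = 0 := hΛV _ ⟨g, rfl⟩
  rw [map_sub, map_smul, smul_eq_mul, sub_eq_zero] at hzero
  rw [hint, hint, hzero]

end PositiveOperator

section Covering

variable {E X : Type*} [TopologicalSpace E] [TopologicalSpace X] {p : E → X}

theorem finite_fiber_of_isCoveringMap [CompactSpace E] [T1Space X] (hp : IsCoveringMap p) (x : X) :
    Finite {y // p y = x} := by
  have hdisc : IsDiscrete (p ⁻¹' {x}) := isDiscrete_iff_discreteTopology.2 (hp x).1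
  exact (isClosed_singleton.preimage hp.continuous).isCompact.finite hdisc

theorem continuous_tsum_fiber {R : Type*} [AddCommMonoid R] [TopologicalSpace R] [ContinuousAdd R]
    (hp : IsCoveringMap p) (hfin : ∀ x, Finite {y // p y = x}) {h : E → R} (hh : Continuous h) :
    Continuous fun x ↦ ∑' y : {y // p y = x}, h y := by
  refine continuous_iff_continuousAt.2 fun x ↦ ?_
  obtain ⟨-, U, hxU, hU, -, H, hH⟩ := hp x
  have : Finite (p ⁻¹' {x}) := hfin x
  have := Fintype.ofFinite (p ⁻¹' {x})
  have hpH (z : U) (i : p ⁻¹' {x}) : p (H.symm (z, i)) = z := by simp [← hH]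
  have hbij (z : U) : Function.Bijective
      fun i : p ⁻¹' {x} ↦ (⟨H.symm (z, i), hpH z i⟩ : {y // p y = z}) := by
    refine ⟨fun i j hij ↦ ?_, fun ⟨y, hy⟩ ↦ ?_⟩
    · simpa [Subtype.val_inj] using hij
    · have hyU : y ∈ p ⁻¹' U := by simp [hy]
      refine ⟨(H ⟨y, hyU⟩).2, Subtype.ext ?_⟩
      have hz : z = (H ⟨y, hyU⟩).1 := Subtype.ext ((hH ⟨y, hyU⟩).trans hy).symm
      simp [hz]
  have hsum (z : U) : ∑' y : {y // p y = z}, h y = ∑ i, h (H.symm (z, i)) := by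
    rw [← (Equiv.ofBijective _ (hbij z)).tsum_eq, tsum_fintype]
    rfl
  have hcont : Continuous fun z : U ↦ ∑' y : {y // p y = z}, h y := by
    simp only [hsum]
    fun_prop
  exact (continuousOn_iff_continuous_domRestrict.2 hcont).continuousAt (hU.mem_nhds hxU)

theorem isLocalHomeomorph_of_forall_dist_le_mul {X Y : Type*} [MetricSpace X] [PseudoMetricSpace Y]
    {f : X → Y} (hf : Continuous f) (hloc : ∀ x, ∃ K : ℝ, ∃ U, IsOpen U ∧ x ∈ U ∧ IsOpen (f '' U) ∧
      ∀ y ∈ U, ∀ z ∈ U, dist y z ≤ K * dist (f y) (f z)) : IsLocalHomeomorph f := by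
  refine isLocalHomeomorph_iff_isOpenEmbedding_restrict.2 fun x ↦ ?_
  obtain ⟨K, U, hU, hxU, hfU, hK⟩ := hloc x
  have hanti : AntilipschitzWith K.toNNReal (U.domRestrict f) := .of_le_mul_dist fun y z ↦
    (hK y y.2 z z.2).trans (mul_le_mul_of_nonneg_right K.le_coe_toNNReal dist_nonneg)
  exact ⟨U, hU.mem_nhds hxU, hanti.isEmbedding (hf.comp continuous_subtype_val),
    by rwa [Set.range_domRestrict]⟩

end Covering

theorem HolderBound.continuous {M : Type*} [MetricSpace M] {α C : ℝ} {φ : M → ℝ}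
    (hφ : HolderBound α C φ) (hα : 0 < α) : Continuous φ := by
  refine continuous_iff_continuousAt.2 fun x ↦ tendsto_iff_dist_tendsto_zero.2 ?_
  have hbound : Continuous fun y ↦ C * dist y x ^ α :=
    continuous_const.mul ((continuous_id.dist continuous_const).rpow_const fun _ ↦ .inr hα.le)
  have hlim : Tendsto (fun y ↦ C * dist y x ^ α) (𝓝 x) (𝓝 0) := by
    simpa [Real.zero_rpow hα.ne'] using hbound.tendsto x
  exact squeeze_zero (fun _ ↦ dist_nonneg) (fun y ↦ hφ y x) hlim

section TransferOperator

variable {M : Type*} {f : M → M} {φ : M → ℝ}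

theorem natCard_mul_exp_iInf_le_transferOp_one (hφ : BddBelow (range φ)) {x : M}
    [Finite {y // f y = x}] :
    Nat.card {y // f y = x} * exp (⨅ y, φ y) ≤ transferOp f φ (fun _ ↦ 1) x := by
  have := Fintype.ofFinite {y // f y = x}
  rw [transferOp, tsum_fintype, Nat.card_eq_fintype_card, ← nsmul_eq_mul]
  refine Finset.card_nsmul_le_sum _ _ _ fun y _ ↦ ?_
  simpa using ciInf_le hφ y.1

theorem continuous_transferOp [TopologicalSpace M] (hf : IsCoveringMap f)
    (hfin : ∀ x, Finite {y // f y = x}) (hφ : Continuous φ) {g : M → ℝ} (hg : Continuous g) :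
    Continuous (transferOp f φ g) :=
  continuous_tsum_fiber hf hfin (hφ.rexp.mul hg)

/-- The transfer operator of `(f, φ)` as a positive operator on `C(M, ℝ)`. -/
noncomputable def transferPositiveLinearMap [TopologicalSpace M] (hf : IsCoveringMap f)
    (hfin : ∀ x, Finite {y // f y = x}) (hφ : Continuous φ) : C(M, ℝ) →ₚ[ℝ] C(M, ℝ) :=
  .mk₀
    { toFun := fun g ↦ ⟨transferOp f φ g, continuous_transferOp hf hfin hφ g.continuous⟩
      map_add' := fun g h ↦ by
        ext x
        have := hfin x
        simp [transferOp, mul_add, Summable.tsum_add Summable.of_finite Summable.of_finite]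
      map_smul' := fun c g ↦ by
        ext x
        simp [transferOp, mul_left_comm _ c, tsum_mul_left] }
    fun _ hg _ ↦ tsum_nonneg fun y ↦ mul_nonneg (exp_pos _).le (hg y)

theorem mul_exp_iInf_le_integral_transferOp_one [TopologicalSpace M] [CompactSpace M]
    [MeasurableSpace M] [BorelSpace M] (hf : IsCoveringMap f)
    (hfin : ∀ x, Finite {y // f y = x}) (hφ : Continuous φ) {d : ℕ}
    (hd : ∀ x, d ≤ Nat.card {y // f y = x}) (ν : Measure M) [IsProbabilityMeasure ν] :
    d * exp (⨅ y, φ y) ≤ ∫ x, transferOp f φ (fun _ ↦ 1) x ∂ν := by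
  have hle (x : M) : d * exp (⨅ y, φ y) ≤ transferOp f φ (fun _ ↦ 1) x :=
    calc d * exp (⨅ y, φ y) ≤ Nat.card {y // f y = x} * exp (⨅ y, φ y) := by
          gcongr
          exact hd x
      _ ≤ transferOp f φ (fun _ ↦ 1) x :=
          natCard_mul_exp_iInf_le_transferOp_one (isCompact_range hφ).bddBelow
  have hint : Integrable (transferOp f φ fun _ ↦ 1) ν :=
    (continuous_transferOp hf hfin hφ continuous_const).integrable_of_hasCompactSupport
      (.of_compactSpace _)
  simpa using integral_mono (integrable_const _) hint hle

end TransferOperator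

theorem measurable_measure_of_forall_lintegral_boundedContinuous {X Y : Type*} [MeasurableSpace X]
    [TopologicalSpace Y] [HasOuterApproxClosed Y] [MeasurableSpace Y] [BorelSpace Y]
    {κ : X → Measure Y} [∀ x, IsFiniteMeasure (κ x)]
    (hκ : ∀ g : Y →ᵇ ℝ≥0, Measurable fun x ↦ ∫⁻ y, g y ∂κ x) : Measurable κ := by
  refine Measurable.measure_of_isPiSystem (S := {F | IsClosed F}) ?_ isPiSystem_isClosed
    (fun F hF ↦ ?_) (by simpa using hκ 1)
  · exact BorelSpace.measurable_eq.trans borel_eq_generateFrom_isClosed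
  · exact measurable_of_tendsto_metrizable (fun n ↦ hκ (hF.apprSeq n)) <| tendsto_pi_nhds.2 fun x ↦
      HasOuterApproxClosed.tendsto_lintegral_apprSeq hF (κ x)

section TransferKernel

variable {M : Type*} [MeasurableSpace M] {f : M → M} {φ : M → ℝ}

/-- The measure `∑_{f y = x} e^{φ y} δ_y`, against which integrating `g` gives
`transferOp f φ g x`. It extends the transfer operator to nonnegative measurable functions. -/
noncomputable def transferKernel (f : M → M) (φ : M → ℝ) (x : M) : Measure M :=
  Measure.sum fun y : {y // f y = x} ↦ ENNReal.ofReal (exp (φ y)) • Measure.dirac y.1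

theorem lintegral_transferKernel {g : M → ℝ≥0∞} (hg : Measurable g) (x : M) :
    ∫⁻ y, g y ∂transferKernel f φ x =
      ∑' y : {y // f y = x}, ENNReal.ofReal (exp (φ y)) * g y := by
  simp [transferKernel, lintegral_sum_measure, lintegral_smul_measure, lintegral_dirac' _ hg]

theorem lintegral_coe_transferKernel {g : M → ℝ≥0} (hg : Measurable g) (x : M)
    [Finite {y // f y = x}] :
    ∫⁻ y, g y ∂transferKernel f φ x = ENNReal.ofReal (transferOp f φ (fun y ↦ g y) x) := by
  rw [lintegral_transferKernel hg.coe_nnreal_ennreal, transferOp,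
    ENNReal.ofReal_tsum_of_nonneg (fun y ↦ by positivity) .of_finite]
  simp [ENNReal.ofReal_mul (exp_pos _).le]

theorem isFiniteMeasure_transferKernel (x : M) [Finite {y // f y = x}] :
    IsFiniteMeasure (transferKernel f φ x) := by
  have (y : {y // f y = x}) :
      IsFiniteMeasure (ENNReal.ofReal (exp (φ y)) • Measure.dirac y.1) :=
    Measure.smul_finite _ ENNReal.ofReal_ne_top
  unfold transferKernel
  infer_instance

theorem setLIntegral_exp_neg_transferKernel (hφ : Measurable φ) {E : Set M}
    (hE : MeasurableSet E) (hinj : InjOn f E) (x : M) :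
    ∫⁻ y in E, ENNReal.ofReal (exp (-φ y)) ∂transferKernel f φ x = (f '' E).indicator 1 x := by
  let w : M → ℝ≥0∞ := E.indicator fun y ↦ ENNReal.ofReal (exp (-φ y))
  have hw : Measurable w := Measurable.indicator (by fun_prop) hE
  rw [← lintegral_indicator hE, lintegral_transferKernel hw]
  have hmem : ∀ y ∈ E, ENNReal.ofReal (exp (φ y)) * w y = 1 := fun y hy ↦ by
    simp [w, hy, ← ENNReal.ofReal_mul (exp_pos _).le, ← exp_add]
  have hnotMem : ∀ y ∉ E, ENNReal.ofReal (exp (φ y)) * w y = 0 := fun y hy ↦ by simp [w, hy]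
  by_cases hx : x ∈ f '' E
  · obtain ⟨y, hy, rfl⟩ := hx
    rw [indicator_of_mem (mem_image_of_mem f hy), tsum_eq_single ⟨y, rfl⟩, hmem y hy, Pi.one_apply]
    exact fun z hz ↦ hnotMem z fun hzE ↦ hz (Subtype.ext (hinj hzE hy z.2))
  · rw [indicator_of_notMem hx]
    exact ENNReal.tsum_eq_zero.2 fun z ↦ hnotMem z fun hzE ↦ hx ⟨z, hzE, z.2⟩

variable [TopologicalSpace M] [BorelSpace M]

theorem measurable_transferKernel [HasOuterApproxClosed M] (hf : IsCoveringMap f)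
    (hfin : ∀ x, Finite {y // f y = x}) (hφ : Continuous φ) :
    Measurable (transferKernel f φ) := by
  have (x : M) := isFiniteMeasure_transferKernel (f := f) (φ := φ) x
  refine measurable_measure_of_forall_lintegral_boundedContinuous fun g ↦ ?_
  simp only [lintegral_coe_transferKernel g.continuous.measurable]
  exact (continuous_transferOp hf hfin hφ (by fun_prop)).measurable.ennreal_ofReal

theorem bind_transferKernel [CompactSpace M] [HasOuterApproxClosed M] (hf : IsCoveringMap f)
    (hfin : ∀ x, Finite {y // f y = x}) (hφ : Continuous φ) {lam : ℝ} (hlam : 0 ≤ lam)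
    {ν : Measure M} [IsFiniteMeasure ν]
    (hν : ∀ g : M → ℝ, Continuous g → ∫ x, transferOp f φ g x ∂ν = lam * ∫ x, g x ∂ν) :
    ν.bind (transferKernel f φ) = ENNReal.ofReal lam • ν := by
  have := Measure.smul_finite ν (ENNReal.ofReal_ne_top (r := lam))
  refine (ext_of_forall_lintegral_eq_of_IsFiniteMeasure fun g ↦ ?_).symm
  have hg : Continuous fun x ↦ (g x : ℝ) := by fun_prop
  have hint {k : M → ℝ} (hk : Continuous k) : Integrable k ν :=
    hk.integrable_of_hasCompactSupport (.of_compactSpace k)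
  calc ∫⁻ x, g x ∂ENNReal.ofReal lam • ν
      = ENNReal.ofReal lam * ENNReal.ofReal (∫ x, g x ∂ν) := by
        rw [lintegral_smul_measure, smul_eq_mul, lintegral_coe_eq_integral _ (hint hg)]
    _ = ENNReal.ofReal (∫ x, transferOp f φ (fun y ↦ g y) x ∂ν) := by
        rw [hν _ hg, ENNReal.ofReal_mul hlam]
    _ = ∫⁻ x, ENNReal.ofReal (transferOp f φ (fun y ↦ g y) x) ∂ν :=
        ofReal_integral_eq_lintegral_ofReal (hint (continuous_transferOp hf hfin hφ hg)) <|
          .of_forall fun x ↦ tsum_nonneg fun y ↦ by positivity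
    _ = ∫⁻ x, g x ∂ν.bind (transferKernel f φ) := by
        rw [Measure.lintegral_bind (measurable_transferKernel hf hfin hφ).aemeasurable
          g.continuous.measurable.coe_nnreal_ennreal.aemeasurable]
        simp only [lintegral_coe_transferKernel g.continuous.measurable]

theorem measure_image_eq_of_bind_transferKernel [PolishSpace M] (hf : Continuous f)
    (hφ : Measurable φ) (hκ : Measurable (transferKernel f φ)) {ν : Measure M} {c : ℝ≥0∞}
    (hν : ν.bind (transferKernel f φ) = c • ν) {E : Set M} (hE : MeasurableSet E)
    (hinj : InjOn f E) :
    ν (f '' E) = c * ∫⁻ x in E, ENNReal.ofReal (exp (-φ x)) ∂ν := by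
  have hw : Measurable fun x ↦ ENNReal.ofReal (exp (-φ x)) := by fun_prop
  have hfE : MeasurableSet (f '' E) := hE.image_of_continuousOn_injOn hf.continuousOn hinj
  calc ν (f '' E)
      = ∫⁻ x, ∫⁻ y in E, ENNReal.ofReal (exp (-φ y)) ∂transferKernel f φ x ∂ν := by
        simp only [setLIntegral_exp_neg_transferKernel hφ hE hinj, lintegral_indicator_one hfE]
    _ = ∫⁻ y in E, ENNReal.ofReal (exp (-φ y)) ∂ν.bind (transferKernel f φ) := by
        simp only [← lintegral_indicator hE]
        exact (Measure.lintegral_bind hκ.aemeasurable (hw.indicator hE).aemeasurable).symm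
    _ = c * ∫⁻ x in E, ENNReal.ofReal (exp (-φ x)) ∂ν := by
        rw [hν, setLIntegral_smul_measure, smul_eq_mul]

end TransferKernel

theorem conformal_measure_exists_general {M : Type*} [TopologicalSpace M] [CompactSpace M]
    [PolishSpace M] [Nonempty M] [MeasurableSpace M] [BorelSpace M]
    {f : M → M} (hf : IsLocalHomeomorph f) {φ : M → ℝ} (hφ : Continuous φ)
    {deg : ℕ} (hdeg : ∀ x : M, deg ≤ Nat.card {y : M // f y = x}) :
    ∃ (lam : ℝ) (ν : Measure M), IsProbabilityMeasure ν ∧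
      (deg : ℝ) * Real.exp (⨅ x, φ x) ≤ lam ∧
      (∀ g : M → ℝ, Continuous g →
        ∫ x, transferOp f φ g x ∂ν = lam * ∫ x, g x ∂ν) ∧
      ∀ E : Set M, MeasurableSet E → Set.InjOn f E →
        ν (f '' E) = ∫⁻ x in E, ENNReal.ofReal (lam * Real.exp (-φ x)) ∂ν := by
  have hcov : IsCoveringMap f := isLocalHomeomorph_iff_isCoveringMap.1 hf
  have hfin := finite_fiber_of_isCoveringMap hcov
  obtain ⟨lam, ν, hprob, hν⟩ := exists_eigenmeasure (transferPositiveLinearMap hcov hfin hφ)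
  replace hν (g : M → ℝ) (hg : Continuous g) :
      ∫ x, transferOp f φ g x ∂ν = lam * ∫ x, g x ∂ν := hν ⟨g, hg⟩
  have hle : deg * exp (⨅ x, φ x) ≤ lam := by
    simpa [hν _ continuous_const] using mul_exp_iInf_le_integral_transferOp_one hcov hfin hφ hdeg ν
  have hlam : 0 ≤ lam := le_trans (by positivity) hle
  have hbind := bind_transferKernel hcov hfin hφ hlam hν
  refine ⟨lam, ν, hprob, hle, hν, fun E hE hinj ↦ ?_⟩
  rw [measure_image_eq_of_bind_transferKernel hcov.continuous hφ.measurable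
    (measurable_transferKernel hcov hfin hφ) hbind hE hinj, ← lintegral_const_mul _ (by fun_prop)]
  simp only [ENNReal.ofReal_mul hlam]

/-- Proposition (existence of an expanding conformal measure): under (H1), (H2),
topological exactness of `f`, and `sup φ - inf φ < log deg f - log q`, there are
`λ ≥ deg f · e^{inf φ}` and a Borel probability measure `ν` with `𝓛_φ^* ν = λ ν`
and Jacobian `J_ν f = λ e^{-φ}`. -/
theorem conformal_measure_exists
    {M : Type*} [MetricSpace M] [CompactSpace M] [ConnectedSpace M]
    [MeasurableSpace M] [BorelSpace M]
    (f : M → M) (hfc : Continuous f)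
    (Lc : M → ℝ) (hLc : Continuous Lc)
    (hloc : ∀ x : M, ∃ U : Set M, IsOpen U ∧ x ∈ U ∧ Set.InjOn f U ∧
      IsOpen (f '' U) ∧ ∀ y ∈ U, ∀ z ∈ U, dist y z ≤ Lc x * dist (f y) (f z))
    (deg q : ℕ) (hdeg : ∀ x : M, Nat.card {y : M // f y = x} = deg)
    (σ L : ℝ) (hσ : 1 < σ) (hL : 1 ≤ L)
    (A : Set M) (hA : IsOpen A)
    (hH1 : ∀ x : M, (x ∈ A → Lc x ≤ L) ∧ (x ∉ A → Lc x ≤ σ⁻¹))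
    (hH2 : ∃ 𝒰 : Finset (Set M), (∀ U ∈ 𝒰, IsOpen U ∧ Set.InjOn f U) ∧
      (⋃ U ∈ 𝒰, U) = Set.univ ∧ ∃ 𝒰' ⊆ 𝒰, 𝒰'.card = q ∧ A ⊆ ⋃ U ∈ 𝒰', U)
    (hq : q < deg)
    (hexact : ∀ U : Set M, IsOpen U → U.Nonempty → ∃ n : ℕ, 1 ≤ n ∧ f^[n] '' U = Set.univ)
    (α : ℝ) (hα0 : 0 < α) (hα1 : α ≤ 1)
    (φ : M → ℝ) (hφH : ∃ C, 0 ≤ C ∧ HolderBound α C φ)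
    (hφ : (⨆ x, φ x) - (⨅ x, φ x) < Real.log deg - Real.log q) :
    ∃ (lam : ℝ) (ν : Measure M), IsProbabilityMeasure ν ∧
      (deg : ℝ) * Real.exp (⨅ x, φ x) ≤ lam ∧
      (∀ g : M → ℝ, Continuous g →
        ∫ x, transferOp f φ g x ∂ν = lam * ∫ x, g x ∂ν) ∧
      ∀ E : Set M, MeasurableSet E → Set.InjOn f E →
        ν (f '' E) = ∫⁻ x in E, ENNReal.ofReal (lam * Real.exp (-φ x)) ∂ν := by
  obtain ⟨C, -, hC⟩ := hφH
  exact conformal_measure_exists_general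
    (isLocalHomeomorph_of_forall_dist_le_mul hfc fun x ↦
      let ⟨U, hU, hxU, _, hfU, hdist⟩ := hloc x
      ⟨Lc x, U, hU, hxU, hfU, hdist⟩)
    (hC.continuous hα0) fun x ↦ (hdeg x).ge
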